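/- arXiv:2211.09094 — 2 statements merged into one kernel-verified Lean document; each statement's English description precedes it below -/
import Mathlib

section
/- Fix an integer n ≥ 1. Then lim_{m→∞} (S_{n,m} − m)/√m = (π/2)·M_n, where M_n is the expected value of the maximum of n independent standard normal random variables. That is, S_{n,m} = m + (π/2)M_n√m + o_n(√m) as m → ∞ with n fixed. -/
open Finset MeasureTheory ProbabilityTheory

/-- The maximum entry of a tuple `j : Fin n → Fin (m+1)`, as a natural number. -/
def maxEntry {n m : ℕ} (j : Fin n → Fin (m + 1)) : ℕ :=
  Finset.univ.sup (fun i => (j i : ℕ))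

/-- Expected value of `max_i X_i(t)` for the multivariate hypergeometric counts. -/
noncomputable def expMaxHyper (n m t : ℕ) : ℝ :=
  ∑ j ∈ univ.filter (fun j : Fin n → Fin (m + 1) => ∑ i, (j i : ℕ) = t),
    ((∏ i, (Nat.choose m (j i : ℕ) : ℝ)) / (Nat.choose (n * m) t : ℝ)) * (maxEntry j : ℝ)

/-- `S n m`: expected number of correct guesses under the optimal strategy. -/
noncomputable def S (n m : ℕ) : ℝ :=
  ∑ t ∈ Finset.Icc 1 (n * m), expMaxHyper n m t / t

/-- `M n`: the expected value of the maximum of `n` i.i.d. standard normal random variables. -/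
noncomputable def gaussMaxExp (n : ℕ) : ℝ :=
  ∫ x : Fin n → ℝ, (⨆ i, x i) ∂(Measure.pi fun _ : Fin n => gaussianReal 0 1)

/-!
Let `X₁, …, Xₙ` be independent binomial variables with parameters `m` and `p`. Conditionally on
`X₁ + ⋯ + Xₙ = t` they are the multivariate hypergeometric counts, and
`∫₀¹ p⁻¹ P(X₁ + ⋯ + Xₙ = t) dp = C(nm, t) B(t, nm - t + 1) = 1 / t`, which is exactly the weight of
`t` in `S n m`. Hence `S n m = ∫₀¹ p⁻¹ E[max Xᵢ] dp`. Standardizing the binomials turns this into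
`(S n m - m) / √m = ∫₀¹ √(p (1 - p)) / p · E[max Yᵢ] dp`, where `Yᵢ = (Xᵢ - m p) / √(m p (1 - p))`.
By the central limit theorem and the uniform bound on second moments the inner expectation tends to
that of the maximum of standard Gaussians, and dominated convergence leaves the factor
`∫₀¹ √(p (1 - p)) / p dp = B(1/2, 3/2) = π / 2`.
-/

open Filter
open scoped Topology unitInterval

section WeakConvergence

lemma abs_sub_clamp_le_sq_div {K : ℝ} (hK : 0 < K) (x : ℝ) :
    |x - max (-K) (min K x)| ≤ x ^ 2 / K := by
  rw [le_div_iff₀ hK]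
  rcases le_total x K with hxK | hKx
  · rw [min_eq_right hxK]
    rcases le_total (-K) x with hx | hx
    · simpa [max_eq_right hx] using sq_nonneg x
    · rw [max_eq_left hx, abs_of_nonpos (by linarith)]
      nlinarith
  · rw [min_eq_left hKx, max_eq_right (by linarith), abs_of_nonneg (by linarith)]
    nlinarith

variable {Ω : Type*} [MeasurableSpace Ω]

lemma abs_integral_sub_integral_clamp_le {μ : Measure Ω} [IsFiniteMeasure μ] {f : Ω → ℝ}
    (hf : MemLp f 2 μ) {K : ℝ} (hK : 0 < K) :
    |∫ ω, f ω ∂μ - ∫ ω, max (-K) (min K (f ω)) ∂μ| ≤ (∫ ω, f ω ^ 2 ∂μ) / K := by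
  have hfi : Integrable f μ := hf.integrable (by norm_num)
  have hclamp : Integrable (fun ω => max (-K) (min K (f ω))) μ :=
    (integrable_const _).sup ((integrable_const _).inf hfi)
  rw [← integral_sub hfi hclamp, ← integral_div]
  exact abs_integral_le_integral_abs.trans <| integral_mono (hfi.sub hclamp).abs
    (hf.integrable_sq.div_const K) fun ω => abs_sub_clamp_le_sq_div hK (f ω)

lemma tendsto_integral_of_tendsto_of_integral_sq_le [TopologicalSpace Ω] [OpensMeasurableSpace Ω]
    {ι : Type*} {l : Filter ι} {ν : ι → ProbabilityMeasure Ω} {μ : ProbabilityMeasure Ω}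
    (hν : Tendsto ν l (𝓝 μ)) {f : Ω → ℝ} (hf : Continuous f) (hμf : MemLp f 2 (μ : Measure Ω))
    (hνf : ∀ k, MemLp f 2 (ν k : Measure Ω)) {C : ℝ}
    (hC : ∀ k, ∫ ω, f ω ^ 2 ∂(ν k : Measure Ω) ≤ C) :
    Tendsto (fun k => ∫ ω, f ω ∂(ν k : Measure Ω)) l (𝓝 (∫ ω, f ω ∂(μ : Measure Ω))) := by
  -- Clamping `f` to `[-K, K]` changes each integral by at most `C / K`, uniformly in `k`.
  have hsmall (a : ℝ) : Tendsto (fun K : ℝ => a / K) atTop (𝓝 0) :=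
    tendsto_const_nhds.div_atTop tendsto_id
  have huniform : TendstoUniformly
      (fun (K : ℝ) k => ∫ ω, max (-K) (min K (f ω)) ∂(ν k : Measure Ω))
      (fun k => ∫ ω, f ω ∂(ν k : Measure Ω)) atTop := by
    refine Metric.tendstoUniformly_iff.2 fun ε hε => ?_
    filter_upwards [(hsmall C).eventually_lt_const hε, eventually_gt_atTop 0] with K hKε hK k
    exact ((abs_integral_sub_integral_clamp_le (hνf k) hK).trans
      (div_le_div_of_nonneg_right (hC k) hK.le)).trans_lt hKε
  have hclamp (K : ℝ) (hK : 0 < K) :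
      Tendsto (fun k => ∫ ω, max (-K) (min K (f ω)) ∂(ν k : Measure Ω)) l
        (𝓝 (∫ ω, max (-K) (min K (f ω)) ∂(μ : Measure Ω))) :=
    ProbabilityMeasure.tendsto_iff_forall_integral_tendsto.1 hν <|
      BoundedContinuousFunction.ofNormedAddCommGroup (fun ω => max (-K) (min K (f ω)))
        (by fun_prop) K fun ω => abs_le.2 ⟨le_max_left _ _, max_le (by linarith) (min_le_left _ _)⟩
  have hlimit : Tendsto (fun K : ℝ => ∫ ω, max (-K) (min K (f ω)) ∂(μ : Measure Ω)) atTop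
      (𝓝 (∫ ω, f ω ∂(μ : Measure Ω))) := by
    refine tendsto_iff_dist_tendsto_zero.2 <| squeeze_zero' (.of_forall fun _ => dist_nonneg) ?_
      (hsmall (∫ ω, f ω ^ 2 ∂(μ : Measure Ω)))
    filter_upwards [eventually_gt_atTop 0] with K hK
    rw [dist_comm]
    exact abs_integral_sub_integral_clamp_le hμf hK
  exact huniform.tendsto_of_eventually_tendsto ((eventually_gt_atTop 0).mono hclamp) hlimit

end WeakConvergence

section ExpectedMaximum

lemma continuous_ciSup_apply {ι : Type*} [Finite ι] :
    Continuous fun x : ι → ℝ => ⨆ i, x i := by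
  have := Fintype.ofFinite ι
  cases isEmpty_or_nonempty ι
  · simpa using continuous_const
  · simp_rw [← sup'_univ_eq_ciSup]
    exact Continuous.finset_sup'_apply univ_nonempty fun i _ => continuous_apply i

variable {ι : Type*} [Fintype ι]

lemma sq_ciSup_le_sum_sq (x : ι → ℝ) : (⨆ i, x i) ^ 2 ≤ ∑ i, x i ^ 2 := by
  cases isEmpty_or_nonempty ι
  · simp
  · obtain ⟨i, hi⟩ := exists_eq_ciSup_of_finite (f := x)
    rw [← hi]
    exact single_le_sum (fun j _ => sq_nonneg (x j)) (Finset.mem_univ i)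

/-- The expected maximum of independent real random variables with laws `μ i`. -/
noncomputable def expMax (μ : ι → Measure ℝ) : ℝ :=
  ∫ x, ⨆ i, x i ∂Measure.pi μ

variable {μ : ι → Measure ℝ} [∀ i, IsProbabilityMeasure (μ i)]

lemma integrable_sum_sq_pi (hμ : ∀ i, MemLp id 2 (μ i)) :
    Integrable (fun x : ι → ℝ => ∑ i, x i ^ 2) (Measure.pi μ) :=
  integrable_finsetSum _ fun i _ => integrable_comp_eval (μ := μ) (i := i)
    (f := fun x : ℝ => x ^ 2) (hμ i).integrable_sq

lemma memLp_two_ciSup_pi (hμ : ∀ i, MemLp id 2 (μ i)) :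
    MemLp (fun x : ι → ℝ => ⨆ i, x i) 2 (Measure.pi μ) := by
  have hmeas := continuous_ciSup_apply.aestronglyMeasurable (μ := Measure.pi μ)
  refine (memLp_two_iff_integrable_sq hmeas).2 <|
    (integrable_sum_sq_pi hμ).mono' (hmeas.pow 2) (.of_forall fun x => ?_)
  rw [Real.norm_of_nonneg (sq_nonneg _)]
  exact sq_ciSup_le_sum_sq x

lemma integral_sq_ciSup_pi_le (hμ : ∀ i, MemLp id 2 (μ i)) :
    ∫ x, (⨆ i, x i) ^ 2 ∂Measure.pi μ ≤ ∑ i, ∫ x, x ^ 2 ∂μ i :=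
  calc ∫ x, (⨆ i, x i) ^ 2 ∂Measure.pi μ
      ≤ ∫ x, ∑ i, x i ^ 2 ∂Measure.pi μ :=
        integral_mono (memLp_two_ciSup_pi hμ).integrable_sq (integrable_sum_sq_pi hμ)
          sq_ciSup_le_sum_sq
    _ = ∑ i, ∫ x, x ^ 2 ∂μ i := by
        rw [integral_finsetSum _ fun i _ => integrable_comp_eval (μ := μ) (i := i)
          (f := fun x : ℝ => x ^ 2) (hμ i).integrable_sq]
        exact sum_congr rfl fun i _ =>
          integral_comp_eval (μ := μ) (i := i) (f := fun x : ℝ => x ^ 2) (by fun_prop)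

lemma sq_expMax_le (hμ : ∀ i, MemLp id 2 (μ i)) : expMax μ ^ 2 ≤ ∑ i, ∫ x, x ^ 2 ∂μ i := by
  have hvar := variance_nonneg (fun x : ι → ℝ => ⨆ i, x i) (Measure.pi μ)
  rw [variance_eq_sub (memLp_two_ciSup_pi hμ), sub_nonneg] at hvar
  exact hvar.trans (integral_sq_ciSup_pi_le hμ)

lemma expMax_map_sub_div [Nonempty ι] (hμ : ∀ i, MemLp id 2 (μ i)) (a : ℝ) {b : ℝ} (hb : 0 ≤ b) :
    expMax (fun i => (μ i).map fun x => (x - a) / b) = (expMax μ - a) / b := by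
  have hmono : Monotone fun x : ℝ => (x - a) / b := fun x y hxy => by dsimp only; gcongr
  have hcomm (x : ι → ℝ) : ⨆ i, (x i - a) / b = ((⨆ i, x i) - a) / b :=
    (hmono.map_ciSup_of_continuousAt (by fun_prop) (Set.finite_range x).bddAbove).symm
  rw [expMax, ← Measure.pi_map_pi (fun i => by fun_prop),
    integral_map (Measurable.aemeasurable (by fun_prop))
      continuous_ciSup_apply.aestronglyMeasurable]
  simp_rw [hcomm]
  rw [integral_div, integral_sub ((memLp_two_ciSup_pi hμ).integrable (by norm_num))
    (integrable_const a), integral_const, probReal_univ, one_smul, expMax]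

lemma tendsto_expMax {κ : Type*} {l : Filter κ} {ν : κ → ι → ProbabilityMeasure ℝ}
    {μ : ι → ProbabilityMeasure ℝ} (hν : ∀ i, Tendsto (fun k => ν k i) l (𝓝 (μ i)))
    (hνmem : ∀ k i, MemLp id 2 (ν k i : Measure ℝ)) {C : ℝ}
    (hC : ∀ k i, ∫ x, x ^ 2 ∂(ν k i : Measure ℝ) ≤ C)
    (hμmem : ∀ i, MemLp id 2 (μ i : Measure ℝ)) :
    Tendsto (fun k => expMax fun i => (ν k i : Measure ℝ)) l
      (𝓝 (expMax fun i => (μ i : Measure ℝ))) := by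
  have hpi := (ProbabilityMeasure.continuous_pi.tendsto μ).comp (tendsto_pi_nhds.2 hν)
  exact tendsto_integral_of_tendsto_of_integral_sq_le hpi continuous_ciSup_apply
    (memLp_two_ciSup_pi hμmem) (fun k => memLp_two_ciSup_pi (hνmem k)) fun k =>
      (integral_sq_ciSup_pi_le (hνmem k)).trans (sum_le_sum fun i _ => hC k i)

end ExpectedMaximum

section Binomial

variable {m : ℕ} {p : I}

lemma eval_bernsteinPolynomial (m k : ℕ) (x : ℝ) :
    (bernsteinPolynomial ℝ m k).eval x = m.choose k * x ^ k * (1 - x) ^ (m - k) := by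
  simp [bernsteinPolynomial]

lemma integral_map_cast_binomial_eq_sum_bernstein (m : ℕ) (p : I) (f : ℝ → ℝ) :
    ∫ x, f x ∂Bin(ℝ, m, p) =
      ∑ k ∈ range (m + 1), (bernsteinPolynomial ℝ m k).eval (p : ℝ) * f k := by
  simp only [integral_map_cast_binomial, eval_bernsteinPolynomial, smul_eq_mul,
    ← Nat.range_succ_eq_Iic]

lemma integral_id_map_cast_binomial (m : ℕ) (p : I) : ∫ x, x ∂Bin(ℝ, m, p) = m * p := by
  have h := congrArg (Polynomial.eval (p : ℝ)) (bernsteinPolynomial.sum_smul ℝ m)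
  simp only [Polynomial.eval_finsetSum, Polynomial.eval_X, nsmul_eq_mul, Polynomial.eval_mul,
    Polynomial.eval_natCast] at h
  rw [integral_map_cast_binomial_eq_sum_bernstein, ← h]
  exact sum_congr rfl fun k _ => mul_comm _ _

lemma integral_sub_sq_map_cast_binomial (m : ℕ) (p : I) :
    ∫ x, (x - m * p) ^ 2 ∂Bin(ℝ, m, p) = m * (p * (1 - p)) := by
  have h := congrArg (Polynomial.eval (p : ℝ)) (bernsteinPolynomial.variance ℝ m)
  simp only [Polynomial.eval_finsetSum, Polynomial.eval_X, nsmul_eq_mul, Polynomial.eval_mul,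
    Polynomial.eval_pow, Polynomial.eval_sub, Polynomial.eval_natCast, Polynomial.eval_one] at h
  rw [integral_map_cast_binomial_eq_sum_bernstein, ← mul_assoc, ← h]
  exact sum_congr rfl fun k _ => by ring

lemma charFun_map_cast_binomial (m : ℕ) (p : I) (t : ℝ) :
    charFun Bin(ℝ, m, p) t = (p * Complex.exp (t * Complex.I) + (1 - p)) ^ m := by
  rw [charFun_apply_real, integral_map_cast_binomial, ← Nat.range_succ_eq_Iic, add_pow]
  refine sum_congr rfl fun k _ => ?_
  rw [Complex.real_smul, mul_pow, ← Complex.exp_nat_mul]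
  push_cast
  ring_nf

/-- The law of the standardization `(X - m p) / √(m p (1 - p))` of a binomial random variable `X`
with parameters `m` and `p`. In the degenerate cases `m = 0` and `p ∈ {0, 1}`, where the
denominator vanishes, it is the Dirac mass at `0`. -/
noncomputable def stdBinomial (m : ℕ) (p : I) : Measure ℝ :=
  Bin(ℝ, m, p).map fun x => (x - m * p) / √(m * (p * (1 - p)))

instance isProbabilityMeasure_stdBinomial : IsProbabilityMeasure (stdBinomial m p) :=
  Measure.isProbabilityMeasure_map (by fun_prop)

lemma memLp_id_map_cast_binomial (m : ℕ) (p : I) : MemLp id 2 Bin(ℝ, m, p) :=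
  (memLp_two_iff_integrable_sq (by fun_prop)).2 (integrable_map_cast_binomial _)

lemma memLp_id_stdBinomial (m : ℕ) (p : I) : MemLp id 2 (stdBinomial m p) := by
  refine (memLp_map_measure_iff (by fun_prop) (by fun_prop)).2 <|
    (memLp_two_iff_integrable_sq ?_).2 (integrable_map_cast_binomial _)
  exact Measurable.aestronglyMeasurable (by fun_prop)

lemma integral_id_stdBinomial (m : ℕ) (p : I) : ∫ x, x ∂stdBinomial m p = 0 := by
  rw [stdBinomial, integral_map (by fun_prop) (by fun_prop), integral_div,
    integral_sub (integrable_map_cast_binomial _) (integrable_const _),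
    integral_id_map_cast_binomial, integral_const, probReal_univ, one_smul, sub_self, zero_div]

lemma integral_sq_stdBinomial (m : ℕ) (p : I) :
    ∫ x, x ^ 2 ∂stdBinomial m p = m * (p * (1 - p)) / (m * (p * (1 - p))) := by
  have hnonneg : (0 : ℝ) ≤ m * (p * (1 - p)) :=
    mul_nonneg m.cast_nonneg (mul_nonneg p.2.1 (sub_nonneg.2 p.2.2))
  rw [stdBinomial, integral_map (by fun_prop) (by fun_prop)]
  simp_rw [div_pow, Real.sq_sqrt hnonneg]
  rw [integral_div, integral_sub_sq_map_cast_binomial]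

lemma integral_sq_stdBinomial_le_one (m : ℕ) (p : I) : ∫ x, x ^ 2 ∂stdBinomial m p ≤ 1 :=
  (integral_sq_stdBinomial m p).trans_le (div_self_le_one _)

lemma charFun_stdBinomial (m : ℕ) (p : I) (t : ℝ) :
    charFun (stdBinomial m p) t = charFun (stdBinomial 1 p) ((√m)⁻¹ * t) ^ m := by
  have h (k : ℕ) (s : ℝ) : charFun (stdBinomial k p) s =
      charFun Bin(ℝ, k, p) ((√(k * (p * (1 - p))))⁻¹ * s) *
        Complex.exp (((√(k * (p * (1 - p))))⁻¹ * s : ℝ) * (-(k * p) : ℝ) * Complex.I) := by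
    have hmap : stdBinomial k p =
        (Bin(ℝ, k, p).map (· + -(k * p : ℝ))).map ((√(k * (p * (1 - p))))⁻¹ * ·) := by
      rw [Measure.map_map (by fun_prop) (by fun_prop), stdBinomial]
      exact congrArg (Measure.map · _) (funext fun x => by simp [div_eq_inv_mul, sub_eq_add_neg])
    rw [hmap, charFun_map_mul, charFun_map_add_const]
    simp [mul_comm]
  have hscale : (√(m * (p * (1 - p))))⁻¹ * t = (√(p * (1 - p)))⁻¹ * ((√m)⁻¹ * t) := by
    rw [Real.sqrt_mul m.cast_nonneg, mul_inv]
    ring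
  simp only [h, charFun_map_cast_binomial, Nat.cast_one, one_mul, pow_one, hscale, mul_pow,
    ← Complex.exp_nat_mul]
  push_cast
  ring_nf

lemma mul_one_sub_pos_of_mem_Ioo (hp : p ∈ Set.Ioo 0 1) : 0 < (p : ℝ) * (1 - p) :=
  mul_pos (unitInterval.coe_pos.2 hp.1) (sub_pos.2 (unitInterval.coe_lt_one.2 hp.2))

theorem tendsto_charFun_stdBinomial (hp : p ∈ Set.Ioo 0 1) (t : ℝ) :
    Tendsto (fun m => charFun (stdBinomial m p) t) atTop (𝓝 (charFun (gaussianReal 0 1) t)) := by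
  have hsq : ∫ x, x ^ 2 ∂stdBinomial 1 p = 1 := by
    rw [integral_sq_stdBinomial, Nat.cast_one, one_mul,
      div_self (mul_one_sub_pos_of_mem_Ioo hp).ne']
  have hclt := tendsto_charFun_inv_sqrt_mul_pow (P := stdBinomial 1 p) (X := id) aemeasurable_id
    (integral_id_stdBinomial 1 p) hsq t
  have hgauss : charFun (gaussianReal 0 1) t = Complex.exp (-t ^ 2 / 2) := by
    simp [charFun_gaussianReal, neg_div]
  rw [hgauss]
  exact hclt.congr fun m => by rw [Measure.map_id, ← charFun_stdBinomial]

theorem tendsto_expMax_stdBinomial {ι : Type*} [Fintype ι] (hp : p ∈ Set.Ioo 0 1) :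
    Tendsto (fun m => expMax fun _ : ι => stdBinomial m p) atTop
      (𝓝 (expMax fun _ : ι => gaussianReal 0 1)) :=
  tendsto_expMax (ν := fun m _ => ⟨stdBinomial m p, inferInstance⟩)
    (μ := fun _ => ⟨gaussianReal 0 1, inferInstance⟩)
    (fun _ => ProbabilityMeasure.tendsto_iff_tendsto_charFun.2 (tendsto_charFun_stdBinomial hp))
    (fun m _ => memLp_id_stdBinomial m p) (fun m _ => integral_sq_stdBinomial_le_one m p)
    fun _ => memLp_id_gaussianReal 2

end Binomial

section UnitIntervalIntegrals

lemma ae_mem_Ioo_unitInterval : ∀ᵐ p : I, p ∈ Set.Ioo (0 : I) 1 := by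
  filter_upwards [Measure.ae_ne volume (0 : I), Measure.ae_ne volume (1 : I)] with p h0 h1
  exact ⟨unitInterval.pos_iff_ne_zero.2 h0, unitInterval.lt_one_iff_ne_one.2 h1⟩

lemma cpow_mul_one_sub_cpow_eq_ofReal (a b : ℝ) (p : I) :
    ((p : ℝ) : ℂ) ^ ((a : ℂ) - 1) * (1 - ((p : ℝ) : ℂ)) ^ ((b : ℂ) - 1) =
      ((p : ℝ) ^ (a - 1) * (1 - (p : ℝ)) ^ (b - 1) : ℝ) := by
  rw [Complex.ofReal_mul, Complex.ofReal_cpow p.2.1, Complex.ofReal_cpow (sub_nonneg.2 p.2.2)]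
  push_cast
  rfl

variable {a b : ℝ}

lemma integrable_betaIntegrand (ha : 0 < a) (hb : 0 < b) :
    Integrable fun p : I =>
      ((p : ℝ) : ℂ) ^ ((a : ℂ) - 1) * (1 - ((p : ℝ) : ℂ)) ^ ((b : ℂ) - 1) := by
  have h := Complex.betaIntegral_convergent (u := a) (v := b) (by simpa) (by simpa)
  rw [intervalIntegrable_iff_integrableOn_Icc_of_le zero_le_one] at h
  exact (integrableOn_iff_comap_subtypeVal measurableSet_Icc).1 h

lemma integrable_rpow_mul_one_sub_rpow (ha : 0 < a) (hb : 0 < b) :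
    Integrable fun p : I => (p : ℝ) ^ (a - 1) * (1 - (p : ℝ)) ^ (b - 1) := by
  simpa [cpow_mul_one_sub_cpow_eq_ofReal] using (integrable_betaIntegrand ha hb).re

lemma integral_rpow_mul_one_sub_rpow (ha : 0 < a) (hb : 0 < b) :
    ∫ p : I, (p : ℝ) ^ (a - 1) * (1 - (p : ℝ)) ^ (b - 1) = beta a b := by
  rw [beta_eq_betaIntegralReal a b ha hb, Complex.betaIntegral,
    intervalIntegral.integral_of_le zero_le_one, ← integral_Icc_eq_integral_Ioc,
    ← integral_subtype measurableSet_Icc fun x : ℝ =>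
      (x : ℂ) ^ ((a : ℂ) - 1) * (1 - (x : ℂ)) ^ ((b : ℂ) - 1)]
  simp_rw [cpow_mul_one_sub_cpow_eq_ofReal]
  rw [integral_complex_ofReal, Complex.ofReal_re]

lemma sqrt_mul_one_sub_div_eq_rpow {p : I} (hp : p ∈ Set.Ioo 0 1) :
    √(p * (1 - p)) / (p : ℝ) = (p : ℝ) ^ (1 / 2 - 1 : ℝ) * (1 - (p : ℝ)) ^ (3 / 2 - 1 : ℝ) := by
  have hp0 : 0 < (p : ℝ) := unitInterval.coe_pos.2 hp.1
  rw [Real.sqrt_mul hp0.le, Real.rpow_sub_one hp0.ne', Real.sqrt_eq_rpow, Real.sqrt_eq_rpow]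
  norm_num
  ring

lemma integrable_sqrt_mul_one_sub_div :
    Integrable fun p : I => √(p * (1 - p)) / (p : ℝ) :=
  (integrable_rpow_mul_one_sub_rpow one_half_pos (by norm_num)).congr <|
    ae_mem_Ioo_unitInterval.mono fun _ hp => (sqrt_mul_one_sub_div_eq_rpow hp).symm

lemma integral_sqrt_mul_one_sub_div : ∫ p : I, √(p * (1 - p)) / (p : ℝ) = Real.pi / 2 := by
  have hGamma : Real.Gamma (3 / 2) = 1 / 2 * √Real.pi := by
    rw [← Real.Gamma_one_half_eq, ← Real.Gamma_add_one one_half_pos.ne']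
    norm_num
  rw [integral_congr_ae (ae_mem_Ioo_unitInterval.mono fun _ hp => sqrt_mul_one_sub_div_eq_rpow hp),
    integral_rpow_mul_one_sub_rpow one_half_pos (by norm_num), beta, hGamma,
    Real.Gamma_one_half_eq]
  norm_num [Real.Gamma_two]
  linarith [Real.mul_self_sqrt Real.pi_pos.le]

variable {t N : ℕ}

lemma inv_mul_pow_mul_one_sub_pow_eq_rpow {p : I} (hp : p ∈ Set.Ioo 0 1) (htN : t ≤ N) :
    (p : ℝ)⁻¹ * ((p : ℝ) ^ t * (1 - p) ^ (N - t)) =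
      (p : ℝ) ^ (t - 1 : ℝ) * (1 - (p : ℝ)) ^ ((N - t + 1 : ℝ) - 1) := by
  have hp0 : (p : ℝ) ≠ 0 := (unitInterval.coe_pos.2 hp.1).ne'
  rw [Real.rpow_sub_one hp0, Real.rpow_natCast, add_sub_cancel_right, ← Nat.cast_sub htN,
    Real.rpow_natCast]
  ring

lemma integrable_inv_mul_pow_mul_one_sub_pow (ht : t ≠ 0) (htN : t ≤ N) :
    Integrable fun p : I => (p : ℝ)⁻¹ * ((p : ℝ) ^ t * (1 - p) ^ (N - t)) :=
  have ht' : (0 : ℝ) < t := by positivity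
  have htN' : (0 : ℝ) < N - t + 1 := by have : (t : ℝ) ≤ N := mod_cast htN; linarith
  (integrable_rpow_mul_one_sub_rpow ht' htN').congr <|
    ae_mem_Ioo_unitInterval.mono fun _ hp => (inv_mul_pow_mul_one_sub_pow_eq_rpow hp htN).symm

lemma integral_inv_mul_pow_mul_one_sub_pow (ht : t ≠ 0) (htN : t ≤ N) :
    ∫ p : I, (p : ℝ)⁻¹ * ((p : ℝ) ^ t * (1 - p) ^ (N - t)) = (N.choose t * t : ℝ)⁻¹ := by
  obtain ⟨k, rfl⟩ := Nat.exists_eq_succ_of_ne_zero ht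
  obtain ⟨l, rfl⟩ := Nat.exists_eq_add_of_le htN
  rw [integral_congr_ae (ae_mem_Ioo_unitInterval.mono fun _ hp =>
    inv_mul_pow_mul_one_sub_pow_eq_rpow hp htN),
    integral_rpow_mul_one_sub_rpow (by positivity) (by push_cast; linarith), beta]
  have hl : ((k.succ + l : ℕ) : ℝ) - (k.succ : ℕ) + 1 = l + 1 := by push_cast; ring
  have hsum : ((k.succ : ℕ) : ℝ) + (l + 1) = (k.succ + l : ℕ) + 1 := by push_cast; ring
  rw [hl, hsum, Real.Gamma_nat_eq_factorial, Real.Gamma_nat_eq_factorial, Nat.cast_add_choose,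
    Nat.cast_succ, Real.Gamma_nat_eq_factorial, Nat.succ_eq_add_one, Nat.factorial_succ]
  push_cast
  field_simp

end UnitIntervalIntegrals

section Mixture

variable {ι : Type*} [Fintype ι]

lemma cast_maxEntry {n m : ℕ} (j : Fin n → Fin (m + 1)) :
    (maxEntry j : ℝ) = ⨆ i, ((j i : ℕ) : ℝ) := by
  cases isEmpty_or_nonempty (Fin n)
  · simp [maxEntry]
  · rw [maxEntry, ← sup'_eq_sup univ_nonempty, Nat.cast_finsetSup', sup'_univ_eq_ciSup]

lemma maxEntry_eq_zero_of_sum_eq_zero {n m : ℕ} {j : Fin n → Fin (m + 1)}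
    (hj : ∑ i, (j i : ℕ) = 0) : maxEntry j = 0 := by
  rw [maxEntry, ← Nat.bot_eq_zero, Finset.sup_eq_bot_iff]
  exact sum_eq_zero_iff.1 hj

lemma sum_val_le {n m : ℕ} (j : Fin n → Fin (m + 1)) : ∑ i, (j i : ℕ) ≤ n * m := by
  simpa using sum_le_card_nsmul univ (fun i => (j i : ℕ)) m fun i _ => Nat.lt_succ_iff.1 (j i).2

lemma S_eq_sum (n m : ℕ) :
    S n m = ∑ j : Fin n → Fin (m + 1), (∏ i, (m.choose (j i) : ℝ)) * maxEntry j *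
      ((n * m).choose (∑ i, (j i : ℕ)) * (∑ i, (j i : ℕ) : ℕ) : ℝ)⁻¹ := by
  -- The added term `t = 0` vanishes because `x / 0 = 0`.
  have hrange : S n m = ∑ t ∈ range (n * m + 1), expMaxHyper n m t / t := by
    rw [range_eq_Ico, sum_eq_sum_Ico_succ_bot (Nat.add_one_pos _), Nat.cast_zero, div_zero,
      zero_add, zero_add, Ico_add_one_right_eq_Icc, S]
  rw [hrange, ← sum_fiberwise_of_maps_to (t := range (n * m + 1))
    (g := fun j : Fin n → Fin (m + 1) => ∑ i, (j i : ℕ))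
    fun j _ => mem_range_succ_iff.2 (sum_val_le j)]
  refine sum_congr rfl fun t _ => ?_
  rw [expMaxHyper, sum_div]
  refine sum_congr rfl fun j hj => ?_
  rw [(mem_filter.1 hj).2]
  ring

lemma map_val_comap_val_binomial (m : ℕ) (p : I) :
    (Bin(m, p).comap (Fin.val : Fin (m + 1) → ℕ)).map Fin.val = Bin(m, p) := by
  have hval : MeasurableEmbedding (Fin.val : Fin (m + 1) → ℕ) :=
    ⟨Fin.val_injective, .of_discrete, fun _ _ => .of_discrete⟩
  rw [hval.map_comap]
  refine Measure.restrict_eq_self_of_ae_mem ?_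
  filter_upwards [ae_le_of_hasLaw_binomial (.id (μ := Bin(m, p)))] with k hk
  exact ⟨⟨k, Nat.lt_succ_iff.2 hk⟩, rfl⟩

lemma integral_pi_map_cast_binomial [DecidableEq ι] (m : ℕ) (p : I) {f : (ι → ℝ) → ℝ}
    (hf : Measurable f) :
    ∫ x, f x ∂Measure.pi (fun _ : ι => Bin(ℝ, m, p)) = ∑ j : ι → Fin (m + 1),
      (∏ i, (m.choose (j i) : ℝ) * (p : ℝ) ^ (j i : ℕ) * (1 - (p : ℝ)) ^ (m - (j i : ℕ))) *
        f fun i => (j i : ℕ) := by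
  let ν : Measure (Fin (m + 1)) := Bin(m, p).comap Fin.val
  have hν : ν.map Fin.val = Bin(m, p) := map_val_comap_val_binomial m p
  have : IsProbabilityMeasure ν :=
    (Measure.isProbabilityMeasure_map_iff (f := Fin.val) (by fun_prop)).1
      (by rw [hν]; infer_instance)
  have hsingleton (k : Fin (m + 1)) : ν.real {k} =
      (m.choose k : ℝ) * (p : ℝ) ^ (k : ℕ) * (1 - (p : ℝ)) ^ (m - (k : ℕ)) := by
    rw [← binomial_real_singleton, ← hν, map_measureReal_apply .of_discrete .of_discrete]
    congr 1
    ext l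
    simp [Fin.ext_iff]
  rw [← hν, Measure.map_map .of_discrete .of_discrete, ← Measure.pi_map_pi fun _ => .of_discrete,
    integral_map .of_discrete hf.aestronglyMeasurable, integral_fintype .of_finite]
  refine sum_congr rfl fun j _ => ?_
  simp only [measureReal_def, Measure.pi_singleton, ENNReal.toReal_prod, ← hsingleton,
    Function.comp_apply, smul_eq_mul]

lemma prod_binomial_weights (m : ℕ) (x : ℝ) (j : ι → Fin (m + 1)) :
    ∏ i, (m.choose (j i) : ℝ) * x ^ (j i : ℕ) * (1 - x) ^ (m - (j i : ℕ)) =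
      (∏ i, (m.choose (j i) : ℝ)) *
        (x ^ (∑ i, (j i : ℕ)) * (1 - x) ^ (Fintype.card ι * m - ∑ i, (j i : ℕ))) := by
  have hsub : Fintype.card ι * m - ∑ i, (j i : ℕ) = ∑ i, (m - (j i : ℕ)) := by
    rw [sum_tsub_distrib _ fun i _ => Nat.lt_succ_iff.1 (j i).2]
    simp
  rw [hsub, prod_mul_distrib, prod_mul_distrib, prod_pow_eq_pow_sum, prod_pow_eq_pow_sum, mul_assoc]

lemma inv_mul_expMax_binomial_eq_sum (n m : ℕ) (p : I) :
    (p : ℝ)⁻¹ * expMax (fun _ : Fin n => Bin(ℝ, m, p)) =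
      ∑ j : Fin n → Fin (m + 1), (∏ i, (m.choose (j i) : ℝ)) * maxEntry j *
        ((p : ℝ)⁻¹ * ((p : ℝ) ^ (∑ i, (j i : ℕ)) * (1 - p) ^ (n * m - ∑ i, (j i : ℕ)))) := by
  rw [expMax, integral_pi_map_cast_binomial m p continuous_ciSup_apply.measurable, mul_sum]
  refine sum_congr rfl fun j _ => ?_
  rw [prod_binomial_weights, Fintype.card_fin, cast_maxEntry]
  ring

lemma integrable_maxEntry_mul {n m : ℕ} (c : ℝ) (j : Fin n → Fin (m + 1)) :
    Integrable fun p : I => c * maxEntry j *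
      ((p : ℝ)⁻¹ * ((p : ℝ) ^ (∑ i, (j i : ℕ)) * (1 - p) ^ (n * m - ∑ i, (j i : ℕ)))) := by
  rcases eq_or_ne (∑ i, (j i : ℕ)) 0 with hj | hj
  · simp [maxEntry_eq_zero_of_sum_eq_zero hj]
  · exact (integrable_inv_mul_pow_mul_one_sub_pow hj (sum_val_le j)).const_mul _

lemma integral_maxEntry_mul {n m : ℕ} (c : ℝ) (j : Fin n → Fin (m + 1)) :
    ∫ p : I, c * maxEntry j *
        ((p : ℝ)⁻¹ * ((p : ℝ) ^ (∑ i, (j i : ℕ)) * (1 - p) ^ (n * m - ∑ i, (j i : ℕ)))) =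
      c * maxEntry j * ((n * m).choose (∑ i, (j i : ℕ)) * (∑ i, (j i : ℕ) : ℕ) : ℝ)⁻¹ := by
  rcases eq_or_ne (∑ i, (j i : ℕ)) 0 with hj | hj
  · simp [maxEntry_eq_zero_of_sum_eq_zero hj]
  · rw [integral_const_mul, integral_inv_mul_pow_mul_one_sub_pow hj (sum_val_le j)]

lemma integrable_inv_mul_expMax_binomial (n m : ℕ) :
    Integrable fun p : I => (p : ℝ)⁻¹ * expMax (fun _ : Fin n => Bin(ℝ, m, p)) := by
  simp_rw [inv_mul_expMax_binomial_eq_sum]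
  exact integrable_finsetSum _ fun j _ => integrable_maxEntry_mul _ j

theorem S_eq_integral_inv_mul_expMax_binomial (n m : ℕ) :
    S n m = ∫ p : I, (p : ℝ)⁻¹ * expMax (fun _ : Fin n => Bin(ℝ, m, p)) := by
  simp_rw [S_eq_sum, inv_mul_expMax_binomial_eq_sum]
  rw [integral_finsetSum _ fun j _ => integrable_maxEntry_mul _ j]
  exact sum_congr rfl fun j _ => (integral_maxEntry_mul _ j).symm

end Mixture

section Asymptotics

lemma abs_expMax_stdBinomial_le {ι : Type*} [Fintype ι] (m : ℕ) (p : I) :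
    |expMax fun _ : ι => stdBinomial m p| ≤ √(Fintype.card ι) :=
  Real.abs_le_sqrt <| (sq_expMax_le fun _ => memLp_id_stdBinomial m p).trans <| by
    simpa using sum_le_card_nsmul univ _ 1 fun (_ : ι) _ => integral_sq_stdBinomial_le_one m p

lemma inv_mul_expMax_binomial_sub_div_sqrt {ι : Type*} [Fintype ι] [Nonempty ι] (m : ℕ) {p : I}
    (hp : p ∈ Set.Ioo 0 1) :
    ((p : ℝ)⁻¹ * expMax (fun _ : ι => Bin(ℝ, m, p)) - m) / √m =
      √(p * (1 - p)) / p * expMax fun _ : ι => stdBinomial m p := by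
  have hp0 : (p : ℝ) ≠ 0 := (unitInterval.coe_pos.2 hp.1).ne'
  have hsqrt : √(p * (1 - p) : ℝ) ≠ 0 := (Real.sqrt_pos.2 (mul_one_sub_pos_of_mem_Ioo hp)).ne'
  unfold stdBinomial
  rw [expMax_map_sub_div (fun _ => memLp_id_map_cast_binomial m p) _ (Real.sqrt_nonneg _),
    Real.sqrt_mul m.cast_nonneg]
  field_simp

variable (n m : ℕ) [NeZero n]

lemma inv_mul_expMax_binomial_sub_div_sqrt_ae_eq :
    (fun p : I => ((p : ℝ)⁻¹ * expMax (fun _ : Fin n => Bin(ℝ, m, p)) - m) / √m) =ᵐ[volume]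
      fun p => √(p * (1 - p)) / p * expMax fun _ : Fin n => stdBinomial m p :=
  ae_mem_Ioo_unitInterval.mono fun _ => inv_mul_expMax_binomial_sub_div_sqrt m

theorem S_sub_div_sqrt_eq_integral :
    (S n m - m) / √m =
      ∫ p : I, √(p * (1 - p)) / p * expMax fun _ : Fin n => stdBinomial m p := by
  rw [← integral_congr_ae (inv_mul_expMax_binomial_sub_div_sqrt_ae_eq n m), integral_div,
    integral_sub (integrable_inv_mul_expMax_binomial n m) (integrable_const _),
    ← S_eq_integral_inv_mul_expMax_binomial, integral_const, probReal_univ, one_smul]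

lemma aestronglyMeasurable_mul_expMax_stdBinomial :
    AEStronglyMeasurable
      fun p : I => √(p * (1 - p)) / p * expMax fun _ : Fin n => stdBinomial m p :=
  (((integrable_inv_mul_expMax_binomial n m).sub (integrable_const (m : ℝ))).div_const
    (√m)).aestronglyMeasurable.congr (inv_mul_expMax_binomial_sub_div_sqrt_ae_eq n m)

end Asymptotics

theorem stmt1 (n : ℕ) (hn : 1 ≤ n) :
    Filter.Tendsto (fun m : ℕ => (S n m - m) / Real.sqrt m) Filter.atTop
      (nhds (Real.pi / 2 * gaussMaxExp n)) := by
  have : NeZero n := ⟨Nat.one_le_iff_ne_zero.1 hn⟩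
  have hlimit : ∫ p : I, √(p * (1 - p)) / p * gaussMaxExp n = Real.pi / 2 * gaussMaxExp n := by
    rw [integral_mul_const, integral_sqrt_mul_one_sub_div]
  simp_rw [S_sub_div_sqrt_eq_integral, ← hlimit]
  refine tendsto_integral_of_dominated_convergence (fun p : I => √(p * (1 - p)) / p * √n)
    (fun m => aestronglyMeasurable_mul_expMax_stdBinomial n m)
    (integrable_sqrt_mul_one_sub_div.mul_const _) (fun m => .of_forall fun p => ?_)
    (ae_mem_Ioo_unitInterval.mono fun p hp => (tendsto_expMax_stdBinomial hp).const_mul _)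
  have hnonneg : 0 ≤ √(p * (1 - p)) / (p : ℝ) := div_nonneg (Real.sqrt_nonneg _) p.2.1
  rw [norm_mul, Real.norm_of_nonneg hnonneg, Real.norm_eq_abs]
  exact mul_le_mul_of_nonneg_left
    (by simpa using abs_expMax_stdBinomial_le (ι := Fin n) m p) hnonneg
end

section
/- There exists a universal constant C > 0 such that for all integers n ≥ 2 and m ≥ 1, |S_{n,m} − S̃_{n,m}| ≤ C(√m + ln n). -/
open Finset

/-- The probability `P(Y = k)` for `Y ~ Binomial(m, p)`. -/
noncomputable def binomPMF (m : ℕ) (p : ℝ) (k : ℕ) : ℝ :=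
  (Nat.choose m k : ℝ) * p ^ k * (1 - p) ^ (m - k)

/-- Expected value of `max_i Y_i` for `Y_1, …, Y_n` i.i.d. `Binomial(m, p)`. -/
noncomputable def expMaxBinom (n m : ℕ) (p : ℝ) : ℝ :=
  ∑ j : Fin n → Fin (m + 1), (∏ i, binomPMF m p (j i : ℕ)) * (maxEntry j : ℝ)

/-- `S̃ n m`: the analogue of `S n m` with independent binomials `Y_i(t) ~ Bin(m, t/(nm))`. -/
noncomputable def Stilde (n m : ℕ) : ℝ :=
  ∑ t ∈ Finset.Icc 1 (n * m), expMaxBinom n m ((t : ℝ) / (n * m)) / t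

/-!
For independent `Bin(m, p)` counts with total `T ~ Bin(N, p)`, `N = n * m`, conditioning on `T = t`
gives the hypergeometric counts, so `f p := expMaxBinom n m p` is `𝔼 h(T)` with
`h t := expMaxHyper n m t`. Hence `r p := f p / p` is a combination of Bernstein polynomials of
degree `N - 1`, each of integral `1 / N`, and `S n m` is exactly `∫ r` over `[0, 1]`, while
`Stilde n m` is the right Riemann sum of `r` with mesh `1 / N`.

Thinning makes `r` antitone: keeping each success independently with probability `q` turns
`Bin(m, p)` into `Bin(m, p * q)` and keeps on average a fraction `q` of the largest count, so
`q * f p ≤ f (p * q)`. A right Riemann sum of an antitone function undershoots by at most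
`(r 0 - r 1) / N`, and `r 0 ≤ N` because the maximum is at most the total `T`, of mean `N * p`.
-/

theorem sum_pi_prod_mul_apply {ι R : Type*} [Fintype ι] [DecidableEq ι] [CommSemiring R]
    {κ : ι → Type*} [∀ i, Fintype (κ i)] (w : ∀ i, κ i → R) (a : ι)
    (hw : ∀ i ≠ a, ∑ k, w i k = 1) (g : κ a → R) :
    ∑ j : ∀ i, κ i, (∏ i, w i (j i)) * g (j a) = ∑ k, w a k * g k := by
  have hupdate (j : ∀ i, κ i) : (∏ i, w i (j i)) * g (j a) =
      ∏ i, Function.update w a (fun k => w a k * g k) i (j i) := by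
    rw [← mul_prod_erase univ _ (mem_univ a), ← mul_prod_erase univ _ (mem_univ a),
      Function.update_self, mul_right_comm]
    congr 1
    exact prod_congr rfl fun i hi => by rw [Function.update_of_ne (ne_of_mem_erase hi)]
  simp_rw [hupdate]
  rw [← Fintype.prod_sum, Fintype.prod_eq_single a fun i hi => ?_, Function.update_self]
  rw [Function.update_of_ne hi, hw i hi]

theorem integral_eval_derivative (P : Polynomial ℝ) (a b : ℝ) :
    ∫ x in a..b, P.derivative.eval x = P.eval b - P.eval a :=
  intervalIntegral.integral_eq_sub_of_hasDerivAt (fun x _ => P.hasDerivAt x)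
    (P.derivative.continuous.intervalIntegrable _ _)

theorem integral_sub_right_sum_mem_Icc_of_antitoneOn {f : ℝ → ℝ} {a b : ℝ} (hab : a ≤ b)
    (hf : AntitoneOn f (Set.Icc a b)) {N : ℕ} (hN : N ≠ 0) :
    (∫ x in a..b, f x) - (b - a) / N * ∑ t ∈ Icc 1 N, f (a + (b - a) / N * t) ∈
      Set.Icc 0 ((b - a) / N * (f a - f b)) := by
  set c := (b - a) / N with hc
  have hc₀ : 0 ≤ c := div_nonneg (sub_nonneg.mpr hab) (Nat.cast_nonneg N)
  have hend : a + c * N = b := by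
    rw [hc, div_mul_cancel₀ _ (Nat.cast_ne_zero.mpr hN), add_sub_cancel]
  have hscale : AntitoneOn (fun x => f (a + c * x)) (Set.Icc (0 : ℕ) N) := by
    refine hf.comp_MonotoneOn (fun x _ y _ hxy => by gcongr) fun x hx => ?_
    rw [Nat.cast_zero] at hx
    exact ⟨le_add_of_nonneg_right (mul_nonneg hc₀ hx.1),
      hend ▸ by gcongr; exact hx.2⟩
  have hintegral : c * ∫ x in ((0 : ℕ) : ℝ)..N, f (a + c * x) = ∫ x in a..b, f x := by
    rw [← smul_eq_mul, intervalIntegral.smul_integral_comp_add_mul, Nat.cast_zero, mul_zero,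
      add_zero, hend]
  have hlower := mul_le_mul_of_nonneg_left (hscale.sum_le_integral_Ico N.zero_le) hc₀
  have hupper := mul_le_mul_of_nonneg_left (hscale.integral_le_sum_Ico N.zero_le) hc₀
  have hshift : ∑ t ∈ Icc 1 N, f (a + c * t) = ∑ t ∈ Ico 0 N, f (a + c * (t + 1 : ℕ)) := by
    rw [sum_Ico_add' (fun t : ℕ => f (a + c * t)), Ico_add_one_right_eq_Icc]
  have htelescope : ∑ t ∈ Ico 0 N, f (a + c * t) - ∑ t ∈ Ico 0 N, f (a + c * (t + 1 : ℕ)) =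
      f a - f b := by
    rw [← sum_sub_distrib, ← range_eq_Ico, sum_range_sub' (fun t : ℕ => f (a + c * t)),
      Nat.cast_zero, mul_zero, add_zero, hend]
  rw [hintegral] at hlower hupper
  rw [hshift, ← htelescope, mul_sub]
  exact ⟨sub_nonneg.mpr hlower, sub_le_sub_right hupper _⟩

section Binomial

variable {k l m n : ℕ} {p q : ℝ}

theorem binomPMF_nonneg (hp₀ : 0 ≤ p) (hp₁ : p ≤ 1) (m k : ℕ) : 0 ≤ binomPMF m p k := by
  have : 0 ≤ 1 - p := sub_nonneg.mpr hp₁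
  unfold binomPMF
  positivity

theorem prod_binomPMF_nonneg {ι : Type*} (s : Finset ι) (hp₀ : 0 ≤ p) (hp₁ : p ≤ 1)
    (a b : ι → ℕ) : 0 ≤ ∏ i ∈ s, binomPMF (a i) p (b i) :=
  prod_nonneg fun _ _ => binomPMF_nonneg hp₀ hp₁ _ _

theorem binomPMF_eq_zero_of_lt (p : ℝ) (h : m < k) : binomPMF m p k = 0 := by
  simp [binomPMF, Nat.choose_eq_zero_of_lt h]

theorem binomPMF_eq_eval_bernsteinPolynomial (m k : ℕ) (p : ℝ) :
    binomPMF m p k = (bernsteinPolynomial ℝ m k).eval p := by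
  simp [binomPMF, bernsteinPolynomial]

theorem continuous_binomPMF (m k : ℕ) : Continuous fun p => binomPMF m p k := by
  unfold binomPMF
  fun_prop

theorem sum_fin_binomPMF_mul (hl : l ≤ m) (p : ℝ) (g : ℕ → ℝ) :
    ∑ k : Fin (m + 1), binomPMF l p k * g k = ∑ k ∈ range (l + 1), binomPMF l p k * g k := by
  rw [Fin.sum_univ_eq_sum_range fun k => binomPMF l p k * g k]
  refine (sum_subset (range_mono (by lia)) fun k _ hk => ?_).symm
  rw [binomPMF_eq_zero_of_lt p (by simpa using hk), zero_mul]

theorem sum_fin_binomPMF (hl : l ≤ m) (p : ℝ) : ∑ k : Fin (m + 1), binomPMF l p k = 1 := by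
  have h := congrArg (Polynomial.eval p) (bernsteinPolynomial.sum ℝ l)
  simp only [Polynomial.eval_finsetSum, Polynomial.eval_one,
    ← binomPMF_eq_eval_bernsteinPolynomial] at h
  simpa [h] using sum_fin_binomPMF_mul hl p fun _ => 1

theorem sum_fin_binomPMF_mul_val (hl : l ≤ m) (p : ℝ) :
    ∑ k : Fin (m + 1), binomPMF l p k * ((k : ℕ) : ℝ) = l * p := by
  have h := congrArg (Polynomial.eval p) (bernsteinPolynomial.sum_smul ℝ l)
  simp only [Polynomial.eval_finsetSum, nsmul_eq_mul, Polynomial.eval_mul,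
    Polynomial.eval_natCast, Polynomial.eval_X, ← binomPMF_eq_eval_bernsteinPolynomial] at h
  rw [sum_fin_binomPMF_mul hl p fun k => (k : ℝ), ← h]
  exact sum_congr rfl fun k _ => mul_comm _ _

theorem succ_mul_binomPMF_succ (m k : ℕ) (p : ℝ) :
    (k + 1) * binomPMF m p (k + 1) = m * p * binomPMF (m - 1) p k := by
  cases m with
  | zero => simp [binomPMF]
  | succ m =>
    have hchoose : ((m + 1 : ℕ) : ℝ) * m.choose k = (m + 1).choose (k + 1) * (k + 1) := by
      exact_mod_cast Nat.add_one_mul_choose_eq m k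
    rw [binomPMF, binomPMF, Nat.add_sub_add_right, Nat.add_sub_cancel]
    linear_combination -(p ^ (k + 1) * (1 - p) ^ (m - k)) * hchoose

theorem binomPMF_mul_binomPMF_add (d k l : ℕ) (p q : ℝ) :
    binomPMF (k + d) p (k + l) * binomPMF (k + l) q k =
      (k + d).choose k * (p * q) ^ k * ((p * (1 - q)) ^ l * (1 - p) ^ (d - l) * d.choose l) := by
  have hchoose : ((k + d).choose (k + l) : ℝ) * (k + l).choose k
      = (k + d).choose k * d.choose l := by
    have h := Nat.choose_mul (n := k + d) (k := k + l) (s := k) (Nat.le_add_right k l)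
    simp only [Nat.add_sub_cancel_left] at h
    exact_mod_cast h
  rw [binomPMF, binomPMF, Nat.add_sub_cancel_left, Nat.add_sub_add_left, mul_pow, mul_pow]
  linear_combination
    p ^ k * p ^ l * (1 - p) ^ (d - l) * q ^ k * (1 - q) ^ l * hchoose

theorem sum_fin_binomPMF_mul_binomPMF (m k : ℕ) (p q : ℝ) :
    ∑ j : Fin (m + 1), binomPMF m p j * binomPMF j q k = binomPMF m (p * q) k := by
  rw [Fin.sum_univ_eq_sum_range fun j => binomPMF m p j * binomPMF j q k]
  have hvanish : ∀ j < k, binomPMF m p j * binomPMF j q k = 0 := fun j hj => by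
    rw [binomPMF_eq_zero_of_lt q hj, mul_zero]
  obtain hmk | hkm := lt_or_ge m k
  · rw [binomPMF_eq_zero_of_lt _ hmk]
    exact sum_eq_zero fun j hj => hvanish j ((mem_range_succ_iff.mp hj).trans_lt hmk)
  obtain ⟨d, rfl⟩ := Nat.exists_eq_add_of_le hkm
  calc ∑ j ∈ range (k + d + 1), binomPMF (k + d) p j * binomPMF j q k
      = ∑ l ∈ range (d + 1), binomPMF (k + d) p (k + l) * binomPMF (k + l) q k := by
        rw [add_assoc, sum_range_add, sum_eq_zero fun j hj => hvanish j (mem_range.mp hj), zero_add]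
    _ = (k + d).choose k * (p * q) ^ k * (p * (1 - q) + (1 - p)) ^ d := by
        simp_rw [binomPMF_mul_binomPMF_add, ← mul_sum, ← add_pow]
    _ = binomPMF (k + d) (p * q) k := by
        rw [binomPMF, Nat.add_sub_cancel_left]
        ring

theorem mul_integral_binomPMF_pred (hk : k < n) :
    n * ∫ p in (0 : ℝ)..1, binomPMF (n - 1) p k = 1 := by
  simp only [binomPMF_eq_eval_bernsteinPolynomial]
  induction k with
  | zero =>
    have h := integral_eval_derivative (bernsteinPolynomial ℝ n 0) 0 1
    simpa [bernsteinPolynomial.derivative_zero, bernsteinPolynomial.eval_at_0,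
      bernsteinPolynomial.eval_at_1, hk.ne] using h
  | succ k ih =>
    have hboundary : (bernsteinPolynomial ℝ n (k + 1)).eval 1 -
        (bernsteinPolynomial ℝ n (k + 1)).eval 0 = 0 := by
      simp [bernsteinPolynomial.eval_at_0, bernsteinPolynomial.eval_at_1, hk.ne]
    rw [← integral_eval_derivative, bernsteinPolynomial.derivative_succ] at hboundary
    simp only [Polynomial.eval_mul, Polynomial.eval_natCast, Polynomial.eval_sub] at hboundary
    rw [intervalIntegral.integral_const_mul,
      intervalIntegral.integral_sub (Polynomial.continuous _ |>.intervalIntegrable _ _)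
        (Polynomial.continuous _ |>.intervalIntegrable _ _),
      mul_sub, ih (Nat.lt_of_succ_lt hk)] at hboundary
    exact (sub_eq_zero.mp hboundary).symm

end Binomial

section ExpectedMaximum

variable {n m : ℕ} {p q : ℝ}

theorem le_maxEntry (j : Fin n → Fin (m + 1)) (i : Fin n) : (j i : ℕ) ≤ maxEntry j :=
  le_sup (f := fun i => (j i : ℕ)) (mem_univ i)

theorem maxEntry_le_sum (j : Fin n → Fin (m + 1)) : maxEntry j ≤ ∑ i, (j i : ℕ) :=
  Finset.sup_le fun _ hi => single_le_sum_of_canonicallyOrdered (f := fun i => (j i : ℕ)) hi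

theorem sum_prod_binomPMF_mul_val {ι : Type*} [Fintype ι] [DecidableEq ι] {l : ι → ℕ}
    (hl : ∀ i, l i ≤ m) (p : ℝ) (a : ι) :
    ∑ j : ι → Fin (m + 1), (∏ i, binomPMF (l i) p (j i)) * ((j a : ℕ) : ℝ) = l a * p := by
  rw [sum_pi_prod_mul_apply (fun i (k : Fin (m + 1)) => binomPMF (l i) p k) a
    (fun i _ => sum_fin_binomPMF (hl i) p) fun k => ((k : ℕ) : ℝ), sum_fin_binomPMF_mul_val (hl a)]

theorem expMaxBinom_le (n m : ℕ) (hp₀ : 0 ≤ p) (hp₁ : p ≤ 1) :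
    expMaxBinom n m p ≤ (n * m : ℕ) * p := by
  calc expMaxBinom n m p
      ≤ ∑ j : Fin n → Fin (m + 1), (∏ i, binomPMF m p (j i)) * ∑ a, ((j a : ℕ) : ℝ) := by
        unfold expMaxBinom
        gcongr with j
        · exact prod_binomPMF_nonneg _ hp₀ hp₁ _ _
        · exact_mod_cast maxEntry_le_sum j
    _ = ∑ _a : Fin n, m * p := by
        simp_rw [mul_sum]
        rw [sum_comm]
        exact sum_congr rfl fun a _ => sum_prod_binomPMF_mul_val (fun _ => le_rfl) p a
    _ = (n * m : ℕ) * p := by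
        simp [mul_assoc]

theorem mul_maxEntry_le_sum_prod_binomPMF (hq₀ : 0 ≤ q) (hq₁ : q ≤ 1) (j : Fin n → Fin (m + 1)) :
    q * maxEntry j ≤
      ∑ k : Fin n → Fin (m + 1), (∏ i, binomPMF (j i) q (k i)) * (maxEntry k : ℝ) := by
  have hw (k : Fin n → Fin (m + 1)) := prod_binomPMF_nonneg univ hq₀ hq₁ (j · : Fin n → ℕ) (k ·)
  refine sup_induction (p := fun x : ℕ => q * x ≤ _) ?_ ?_ fun a _ => ?_
  · simpa using sum_nonneg fun k _ => mul_nonneg (hw k) (Nat.cast_nonneg _)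
  · rintro x hx y hy
    obtain h | h := max_choice x y <;> simpa [h]
  · rw [mul_comm, ← sum_prod_binomPMF_mul_val (fun i => (j i).is_le) q a]
    gcongr with k
    · exact hw k
    · exact le_maxEntry k a

theorem sum_prod_binomPMF_mul_prod_binomPMF {ι : Type*} [Fintype ι] [DecidableEq ι] (m : ℕ)
    (p q : ℝ) (k : ι → ℕ) :
    ∑ j : ι → Fin (m + 1), (∏ i, binomPMF m p (j i)) * ∏ i, binomPMF (j i) q (k i) =
      ∏ i, binomPMF m (p * q) (k i) := by
  simp_rw [← prod_mul_distrib, ← sum_fin_binomPMF_mul_binomPMF]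
  exact (Fintype.prod_sum fun i (j : Fin (m + 1)) => binomPMF m p j * binomPMF j q (k i)).symm

theorem mul_expMaxBinom_le (n m : ℕ) (hp₀ : 0 ≤ p) (hp₁ : p ≤ 1) (hq₀ : 0 ≤ q) (hq₁ : q ≤ 1) :
    q * expMaxBinom n m p ≤ expMaxBinom n m (p * q) := by
  calc q * expMaxBinom n m p
      = ∑ j : Fin n → Fin (m + 1), (∏ i, binomPMF m p (j i)) * (q * maxEntry j) := by
        rw [expMaxBinom, mul_sum]
        exact sum_congr rfl fun j _ => mul_left_comm _ _ _
    _ ≤ ∑ j : Fin n → Fin (m + 1), (∏ i, binomPMF m p (j i)) *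
          ∑ k : Fin n → Fin (m + 1), (∏ i, binomPMF (j i) q (k i)) * (maxEntry k : ℝ) := by
        gcongr with j
        · exact prod_binomPMF_nonneg _ hp₀ hp₁ _ _
        · exact mul_maxEntry_le_sum_prod_binomPMF hq₀ hq₁ j
    _ = expMaxBinom n m (p * q) := by
        simp_rw [mul_sum, ← mul_assoc]
        rw [sum_comm]
        simp_rw [← sum_mul, sum_prod_binomPMF_mul_prod_binomPMF m p q, expMaxBinom]

theorem expMaxHyper_nonneg (n m t : ℕ) : 0 ≤ expMaxHyper n m t := by
  unfold expMaxHyper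
  positivity

theorem expMaxHyper_zero (n m : ℕ) : expMaxHyper n m 0 = 0 := by
  refine sum_eq_zero fun j hj => ?_
  have hmax : maxEntry j = 0 := Nat.eq_zero_of_le_zero <|
    (maxEntry_le_sum j).trans_eq (mem_filter.mp hj).2
  rw [hmax, Nat.cast_zero, mul_zero]

theorem sum_val_le_mul (j : Fin n → Fin (m + 1)) : ∑ i, (j i : ℕ) ≤ n * m := by
  simpa using sum_le_card_nsmul univ (fun i => (j i : ℕ)) m fun i _ => (j i).is_le

theorem prod_binomPMF_eq_binomPMF_sum_mul (p : ℝ) (j : Fin n → Fin (m + 1)) :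
    ∏ i, binomPMF m p (j i) = binomPMF (n * m) p (∑ i, (j i : ℕ)) *
      ((∏ i, (m.choose (j i) : ℝ)) / (n * m).choose (∑ i, (j i : ℕ))) := by
  have hfailures : ∑ i, (m - (j i : ℕ)) = n * m - ∑ i, (j i : ℕ) := by
    rw [sum_tsub_distrib _ fun i _ => (j i).is_le]
    simp
  have hchoose : ((n * m).choose (∑ i, (j i : ℕ)) : ℝ) ≠ 0 := by
    exact_mod_cast (Nat.choose_pos (sum_val_le_mul j)).ne'
  simp only [binomPMF, prod_mul_distrib, prod_pow_eq_pow_sum, hfailures]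
  field_simp

theorem expMaxBinom_eq_sum_binomPMF_mul_expMaxHyper (n m : ℕ) (p : ℝ) :
    expMaxBinom n m p = ∑ t ∈ range (n * m + 1), binomPMF (n * m) p t * expMaxHyper n m t := by
  rw [expMaxBinom, ← sum_fiberwise_of_maps_to
    fun (j : Fin n → Fin (m + 1)) _ => mem_range_succ_iff.mpr (sum_val_le_mul j)]
  refine sum_congr rfl fun t _ => ?_
  rw [expMaxHyper, mul_sum]
  refine sum_congr rfl fun j hj => ?_
  rw [prod_binomPMF_eq_binomPMF_sum_mul, (mem_filter.mp hj).2, mul_assoc]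

end ExpectedMaximum

/-- The ratio `expMaxBinom n m p / p` as a polynomial in `p`, which removes the singularity at
`p = 0`. The truncated `n * m - 1` only matters when `n * m = 0`, where the sum is empty. -/
noncomputable def expMaxRatio (n m : ℕ) (p : ℝ) : ℝ :=
  (n * m : ℕ) * ∑ s ∈ range (n * m),
    expMaxHyper n m (s + 1) / (s + 1) * binomPMF (n * m - 1) p s

theorem expMaxBinom_eq_mul_expMaxRatio (n m : ℕ) (p : ℝ) :
    expMaxBinom n m p = p * expMaxRatio n m p := by
  rw [expMaxBinom_eq_sum_binomPMF_mul_expMaxHyper, sum_range_succ', expMaxHyper_zero, mul_zero,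
    add_zero, expMaxRatio, mul_sum, mul_sum]
  refine sum_congr rfl fun s _ => ?_
  field_simp
  linear_combination expMaxHyper n m (s + 1) * succ_mul_binomPMF_succ (n * m) s p

theorem continuous_expMaxRatio (n m : ℕ) : Continuous (expMaxRatio n m) :=
  continuous_const.mul <| continuous_finsetSum _ fun s _ =>
    continuous_const.mul (continuous_binomPMF _ s)

theorem expMaxRatio_nonneg (n m : ℕ) {p : ℝ} (hp₀ : 0 ≤ p) (hp₁ : p ≤ 1) :
    0 ≤ expMaxRatio n m p := by
  refine mul_nonneg (Nat.cast_nonneg _) (sum_nonneg fun s _ => ?_)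
  exact mul_nonneg (div_nonneg (expMaxHyper_nonneg n m _) (by positivity))
    (binomPMF_nonneg hp₀ hp₁ _ _)

theorem antitoneOn_expMaxRatio_Ioc (n m : ℕ) : AntitoneOn (expMaxRatio n m) (Set.Ioc 0 1) := by
  intro x hx y hy hxy
  have h := mul_expMaxBinom_le n m hy.1.le hy.2 (div_nonneg hx.1.le hy.1.le)
    (div_le_one_of_le₀ hxy hy.1.le)
  rw [mul_div_cancel₀ _ hy.1.ne', expMaxBinom_eq_mul_expMaxRatio,
    expMaxBinom_eq_mul_expMaxRatio, ← mul_assoc, div_mul_cancel₀ _ hy.1.ne'] at h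
  exact le_of_mul_le_mul_left h hx.1

theorem antitoneOn_expMaxRatio_Icc (n m : ℕ) : AntitoneOn (expMaxRatio n m) (Set.Icc 0 1) := by
  have hcluster : ClusterPt (0 : ℝ) (Filter.principal (Set.Ioc 0 1)) := by
    rw [← mem_closure_iff_clusterPt, closure_Ioc zero_ne_one]
    exact Set.left_mem_Icc.mpr zero_le_one
  rw [← Set.Ioc_insert_left zero_le_one]
  exact ((antitoneOn_expMaxRatio_Ioc n m).dual_right.insert_of_continuousWithinAt hcluster
    (continuous_expMaxRatio n m).continuousWithinAt).dual_right

theorem expMaxRatio_zero_le (n m : ℕ) : expMaxRatio n m 0 ≤ (n * m : ℕ) := by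
  have hmem : (0 : ℝ) ∈ closure (Set.Ioc 0 1) := by simp [closure_Ioc]
  refine ContinuousWithinAt.closure_le hmem (continuous_expMaxRatio n m).continuousWithinAt
    continuousWithinAt_const fun p hp => ?_
  have h := expMaxBinom_le n m hp.1.le hp.2
  rw [expMaxBinom_eq_mul_expMaxRatio, mul_comm] at h
  exact le_of_mul_le_mul_right h hp.1

theorem integral_expMaxRatio (n m : ℕ) : ∫ p in (0 : ℝ)..1, expMaxRatio n m p = S n m := by
  unfold expMaxRatio
  rw [intervalIntegral.integral_const_mul, intervalIntegral.integral_finsetSum fun s _ =>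
      ((continuous_binomPMF _ s).intervalIntegrable _ _).const_mul _, S,
    ← Ico_add_one_right_eq_Icc, ← sum_Ico_add' _ 0 (n * m) 1, ← range_eq_Ico, mul_sum]
  refine sum_congr rfl fun s hs => ?_
  rw [intervalIntegral.integral_const_mul, mul_left_comm,
    mul_integral_binomPMF_pred (mem_range.mp hs), mul_one, Nat.cast_add_one]

theorem Stilde_eq_mul_sum_expMaxRatio (n m : ℕ) :
    Stilde n m = 1 / (n * m : ℕ) * ∑ t ∈ Icc 1 (n * m), expMaxRatio n m (1 / (n * m : ℕ) * t) := by
  rw [Stilde, mul_sum]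
  refine sum_congr rfl fun t ht => ?_
  have ht₀ : (t : ℝ) ≠ 0 := Nat.cast_ne_zero.mpr (Nat.one_le_iff_ne_zero.mp (mem_Icc.mp ht).1)
  rw [expMaxBinom_eq_mul_expMaxRatio, Nat.cast_mul, one_div_mul_eq_div]
  field_simp

theorem stmt4_general (n m : ℕ) : S n m - Stilde n m ∈ Set.Icc 0 1 := by
  obtain hN | hN := eq_or_ne (n * m) 0
  · simp [S, Stilde, hN]
  have hgap := integral_sub_right_sum_mem_Icc_of_antitoneOn zero_le_one
    (antitoneOn_expMaxRatio_Icc n m) hN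
  simp only [sub_zero, zero_add, integral_expMaxRatio] at hgap
  rw [← Stilde_eq_mul_sum_expMaxRatio, one_div_mul_eq_div] at hgap
  refine ⟨hgap.1, hgap.2.trans (div_le_one_of_le₀ ?_ (Nat.cast_nonneg _))⟩
  linarith [expMaxRatio_zero_le n m, expMaxRatio_nonneg n m zero_le_one le_rfl]

theorem stmt4 :
    ∃ C > 0, ∀ n m : ℕ, 2 ≤ n → 1 ≤ m →
      |S n m - Stilde n m| ≤ C * (Real.sqrt m + Real.log n) := by
  refine ⟨1, one_pos, fun n m _ hm => (abs_of_nonneg (stmt4_general n m).1).trans_le ?_⟩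
  linarith [(stmt4_general n m).2, Real.one_le_sqrt.mpr (Nat.one_le_cast.mpr hm),
    Real.log_natCast_nonneg n]
end
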